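/- Let u ∈ BV(X). Then for μ-a.e. x ∈ X the following holds: for every set A ⊆ X having density 0 at x, lim_{r→0} (1/r)·(1/μ(B(x,r)))·∫_{A∩B(x,r)} |u − u(x)| dμ = 0. -/

import Mathlib

open MeasureTheory Metric Filter Set Topology
open scoped NNReal ENNReal

noncomputable section

universe u

/-- The measure `μ` is doubling with constant `Cd`:
`0 < μ(B(x,2r)) ≤ Cd·μ(B(x,r)) < ∞` for every `x` and every `r > 0`. -/
def IsDoublingWith {X : Type u} [PseudoMetricSpace X] [MeasurableSpace X]
    (μ : Measure X) (Cd : ℝ≥0) : Prop :=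
  ∀ (x : X) (r : ℝ), 0 < r →
    0 < μ (ball x (2 * r)) ∧
      μ (ball x (2 * r)) ≤ (Cd : ℝ≥0∞) * μ (ball x r) ∧
      (Cd : ℝ≥0∞) * μ (ball x r) < ⊤

/-- `X` is a geodesic space: any two points are joined by a unit-speed geodesic. -/
def IsGeodesic (X : Type u) [PseudoMetricSpace X] : Prop :=
  ∀ x y : X, ∃ γ : ℝ → X,
    LipschitzOnWith 1 γ (Icc 0 (dist x y)) ∧ γ 0 = x ∧ γ (dist x y) = y

/-- `g` is an upper gradient of `u`: for every `L ≥ 0` and every `1`-Lipschitz curve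
`γ : [0,L] → X`, `|u(γ 0) − u(γ L)| ≤ ∫₀^L g(γ t) dt`. -/
def IsUpperGradientOf {X : Type u} [PseudoMetricSpace X] (g u : X → ℝ) : Prop :=
  ∀ L : ℝ, 0 ≤ L → ∀ γ : ℝ → X, LipschitzOnWith 1 γ (Icc 0 L) →
    |u (γ 0) - u (γ L)| ≤ ∫ t in (0:ℝ)..L, g (γ t)

/-- The lower pointwise Lipschitz constant
`lip u (x) = liminf_{r→0} r⁻¹ sup_{y ∈ B(x,r)} |u y − u x|`. -/
def lipConst {X : Type u} [PseudoMetricSpace X] (u : X → ℝ) (x : X) : ℝ≥0∞ :=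
  Filter.liminf
    (fun r : ℝ => ⨆ y ∈ ball x r, ENNReal.ofReal (|u y - u x| / r)) (𝓝[>] (0:ℝ))

/-- `u` is locally Lipschitz on `W`: Lipschitz on every closed bounded subset of `W`. -/
def LocallyLipschitzOnSet {X : Type u} [PseudoMetricSpace X] (u : X → ℝ) (W : Set X) : Prop :=
  ∀ K : Set X, IsClosed K → Bornology.IsBounded K → K ⊆ W →
    ∃ L : ℝ≥0, LipschitzOnWith L u K

/-- `u i → f` in `L¹_loc(W)`. -/
def TendstoL1loc {X : Type u} [PseudoMetricSpace X] [MeasurableSpace X]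
    (μ : Measure X) (u : ℕ → X → ℝ) (f : X → ℝ) (W : Set X) : Prop :=
  ∀ K : Set X, IsClosed K → Bornology.IsBounded K → K ⊆ W →
    Tendsto (fun i => ∫⁻ x in K, ENNReal.ofReal |u i x - f x| ∂μ) atTop (𝓝 0)

/-- Total variation `V(f,W)` of `f` on an open set `W`:
the infimum over sequences of locally Lipschitz functions converging to `f` in `L¹_loc(W)`
of the liminf of `∫_W lip u_i dμ`. -/
def totVarOn {X : Type u} [PseudoMetricSpace X] [MeasurableSpace X]
    (μ : Measure X) (f : X → ℝ) (W : Set X) : ℝ≥0∞ :=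
  ⨅ (us : ℕ → X → ℝ) (_ : ∀ i, LocallyLipschitzOnSet (us i) W)
    (_ : TendstoL1loc μ us f W),
    Filter.liminf (fun i => ∫⁻ x in W, lipConst (us i) x ∂μ) atTop

/-- Total variation `V(f,A)` of `f` on an arbitrary set `A`:
infimum of `V(f,W)` over open `W ⊇ A`. -/
def totVarSet {X : Type u} [PseudoMetricSpace X] [MeasurableSpace X]
    (μ : Measure X) (f : X → ℝ) (A : Set X) : ℝ≥0∞ :=
  ⨅ (W : Set X) (_ : IsOpen W) (_ : A ⊆ W), totVarOn μ f W

/-- `f` is of bounded variation: locally integrable and `V(f,X) < ∞`. -/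
def IsBV {X : Type u} [MetricSpace X] [MeasurableSpace X]
    (μ : Measure X) (f : X → ℝ) : Prop :=
  LocallyIntegrable f μ ∧ totVarOn μ f Set.univ < ⊤

/-- `(X,d,μ)` supports a `1`-Poincaré inequality with constant `CP`. -/
def SupportsPoincare {X : Type u} [MetricSpace X] [MeasurableSpace X]
    (μ : Measure X) (CP : ℝ) : Prop :=
  ∀ u : X → ℝ, LocallyLipschitzOnSet u Set.univ →
    ∀ g : X → ℝ, (∀ x, 0 ≤ g x) → Measurable g → IsUpperGradientOf g u →
      ∀ (x : X) (r : ℝ), 0 < r →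
        (⨍ y in ball x r, |u y - (⨍ z in ball x r, u z ∂μ)| ∂μ) ≤
          CP * r * (⨍ y in ball x r, g y ∂μ)

/-- Standing assumptions: a complete geodesic metric measure space with at least two
points, whose measure is doubling and supports a 1-Poincaré inequality. -/
def GoodSpace (X : Type u) [MetricSpace X] [MeasurableSpace X]
    (μ : Measure X) (Cd : ℝ≥0) (CP : ℝ) : Prop :=
  Nontrivial X ∧ CompleteSpace X ∧ IsGeodesic X ∧
    IsDoublingWith μ Cd ∧ SupportsPoincare μ CP

/-- The codimension-1 Hausdorff measure
`𝓗(A) = sup_{δ>0} inf { Σ μ(B_i)/r_i : 0 < r_i ≤ δ, A ⊆ ⋃ B_i }`,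
the infimum over countable coverings of `A` by balls (balls of nonpositive radius
are empty and contribute `0`). -/
def codimOneH {X : Type u} [PseudoMetricSpace X] [MeasurableSpace X]
    (μ : Measure X) (A : Set X) : ℝ≥0∞ :=
  ⨆ (δ : ℝ) (_ : 0 < δ),
    ⨅ (c : ℕ → X) (r : ℕ → ℝ) (_ : ∀ i, r i ≤ δ)
      (_ : A ⊆ ⋃ i, ball (c i) (r i)),
      ∑' i, if 0 < r i then μ (ball (c i) (r i)) / ENNReal.ofReal (r i) else 0

/-- The measure theoretic boundary `∂*E`. -/
def measBdry {X : Type u} [PseudoMetricSpace X] [MeasurableSpace X]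
    (μ : Measure X) (E : Set X) : Set X :=
  {x : X |
    0 < Filter.limsup (fun r : ℝ => μ (E ∩ ball x r) / μ (ball x r)) (𝓝[>] (0:ℝ)) ∧
    0 < Filter.limsup (fun r : ℝ => μ (Eᶜ ∩ ball x r) / μ (ball x r)) (𝓝[>] (0:ℝ))}

/-- `A` has density `0` at `x`. -/
def DensityZeroAt {X : Type u} [PseudoMetricSpace X] [MeasurableSpace X]
    (μ : Measure X) (A : Set X) (x : X) : Prop :=
  Tendsto (fun r : ℝ => μ (A ∩ ball x r) / μ (ball x r)) (𝓝[>] (0:ℝ)) (𝓝 0)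

/-- `A` has density `1` at `x`. -/
def DensityOneAt {X : Type u} [PseudoMetricSpace X] [MeasurableSpace X]
    (μ : Measure X) (A : Set X) (x : X) : Prop :=
  Tendsto (fun r : ℝ => μ (A ∩ ball x r) / μ (ball x r)) (𝓝[>] (0:ℝ)) (𝓝 1)

/-- `x` is a Lebesgue point of `u`. -/
def LebesguePointOf {X : Type u} [MetricSpace X] [MeasurableSpace X]
    (μ : Measure X) (u : X → ℝ) (x : X) : Prop :=
  Tendsto (fun r : ℝ => ⨍ y in ball x r, |u y - u x| ∂μ) (𝓝[>] (0:ℝ)) (𝓝 0)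

/-- `u` is a Borel representative whose value at each Lebesgue point equals the limit
of its ball averages. -/
def PreciseRep {X : Type u} [MetricSpace X] [MeasurableSpace X]
    (μ : Measure X) (u : X → ℝ) : Prop :=
  Measurable u ∧ ∀ (x : X) (c : ℝ),
    Tendsto (fun r : ℝ => ⨍ y in ball x r, u y ∂μ) (𝓝[>] (0:ℝ)) (𝓝 c) → u x = c

/-- The restricted maximal function `M_R ν (x) = sup_{0<r≤R} ν(B(x,r))/μ(B(x,r))`. -/
def restrMaximal {X : Type u} [PseudoMetricSpace X] [MeasurableSpace X]
    (μ ν : Measure X) (R : ℝ) (x : X) : ℝ≥0∞ :=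
  ⨆ (r : ℝ) (_ : 0 < r) (_ : r ≤ R), ν (ball x r) / μ (ball x r)

/-- `F_g(x,y)`: the infimum of `∫_γ g ds` over 1-Lipschitz curves `γ : [0,L] → Z`
joining `x` to `y` (the infimum over the empty set is `∞`). -/
def curveInf {Z : Type u} [PseudoMetricSpace Z] (g : Z → ℝ) (x y : Z) : ℝ≥0∞ :=
  ⨅ (L : ℝ) (_ : 0 ≤ L) (γ : ℝ → Z) (_ : LipschitzOnWith 1 γ (Icc 0 L))
    (_ : γ 0 = x) (_ : γ L = y),
    ∫⁻ t in Icc (0:ℝ) L, ENNReal.ofReal (g (γ t))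

/-- Weak-star convergence of measures: test against continuous, compactly
supported functions. -/
def WeakStar {Z : Type u} [MetricSpace Z] [MeasurableSpace Z]
    (ν : ℕ → Measure Z) (m : Measure Z) : Prop :=
  ∀ φ : Z → ℝ, Continuous φ → HasCompactSupport φ →
    Tendsto (fun n => ∫ x, φ x ∂(ν n)) atTop (𝓝 (∫ x, φ x ∂m))

/-- `φ ∈ BV_c(U)`: a BV function whose support is compact and contained in `U`. -/
def MemBVc {X : Type u} [MetricSpace X] [MeasurableSpace X]
    (μ : Measure X) (φ : X → ℝ) (U : Set X) : Prop :=
  IsBV μ φ ∧ IsCompact (tsupport φ) ∧ tsupport φ ⊆ U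

/-!
Approximate `u` in `L¹_loc` by locally Lipschitz `v i` with `∫ lip (v i) dμ` bounded. As
`lip (v i)` is an upper gradient of `v i`, the Poincaré inequality passes to the limit and bounds
the oscillation of `u` on a ball `B` of radius `r` by `r` times the variation of `u` in `B`. By
the weak type estimate for the maximal function of the variation, at almost every `x` the
variation in `B(x, r)` is at most `K μ(B(x, r))` for small `r`.

At such a Lebesgue point `x`, cover `B(x, r)` by balls of the much smaller radius `s = 2⁻ⁿ r`
with bounded overlap. The oscillations of `u` in these balls contribute at most a multiple of
`s K μ(B(x, r))` to the integral of `|u - u x|` over `A ∩ B(x, r)`. The averages of `u` over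
them are within `C(n) r` of `u x`, by telescoping over dyadic radii, and contribute at most a
multiple of `C(n) r μ(A ∩ B(x, r))`. Divide by `r μ(B(x, r))`, let `r → 0`, then `n → ∞`.
-/

section LiminfMeasure

variable {X : Type u} [MeasurableSpace X] {ι : Type*}

/-- The setwise lower limit of a sequence of measures. Applied to `ν i = lip (v i) μ` for locally
Lipschitz functions `v i` approximating a `BV` function, it replaces the total variation measure:
it is only superadditive, which is all the covering arguments use. -/
def liminfMeasure (ν : ℕ → Measure X) (W : Set X) : ℝ≥0∞ :=
  liminf (fun i => ν i W) atTop

theorem tsum_liminfMeasure_le {ν : ℕ → Measure X} {B : ι → Set X} {W : Set X} {N : ℝ≥0∞}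
    (hN : N ≠ ⊤) (hB : ∀ i, ∑' j, ν i (B j) ≤ N * ν i W) :
    ∑' j, liminfMeasure ν (B j) ≤ N * liminfMeasure ν W := by
  let _ : MeasurableSpace ι := ⊤
  calc ∑' j, liminfMeasure ν (B j)
      ≤ liminf (fun i => ∑' j, ν i (B j)) atTop := by
        simp only [← lintegral_count]
        exact lintegral_liminf_le fun _ => measurable_from_top
    _ ≤ liminf (fun i => N * ν i W) atTop := liminf_le_liminf (.of_forall hB)
    _ = N * liminfMeasure ν W := ENNReal.liminf_const_mul_of_ne_top hN

theorem tsum_measure_le_mul_of_tsum_indicator_le [Countable ι] {B : ι → Set X}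
    (hB : ∀ i, MeasurableSet (B i)) {W : Set X} (hBW : ∀ i, B i ⊆ W) {N : ℝ≥0∞}
    (hN : ∀ y, ∑' i, (B i).indicator 1 y ≤ N) (m : Measure X) :
    ∑' i, m (B i) ≤ N * m W :=
  calc ∑' i, m (B i) = ∑' i, ∫⁻ y in W, (B i).indicator 1 y ∂m := by
        refine tsum_congr fun i => ?_
        rw [lintegral_indicator_one (hB i), Measure.restrict_apply (hB i), inter_eq_left.2 (hBW i)]
    _ = ∫⁻ y in W, ∑' i, (B i).indicator 1 y ∂m :=
        (lintegral_tsum fun i => (measurable_one.indicator (hB i)).aemeasurable).symm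
    _ ≤ ∫⁻ _ in W, N ∂m := lintegral_mono hN
    _ = N * m W := setLIntegral_const W N

end LiminfMeasure

namespace IsDoublingWith

variable {X : Type u} [PseudoMetricSpace X] [MeasurableSpace X] {μ : Measure X} {Cd : ℝ≥0}

theorem measure_ball_pos (h : IsDoublingWith μ Cd) (x : X) {r : ℝ} (hr : 0 < r) :
    0 < μ (ball x r) := by
  have := (h x (r / 2) (half_pos hr)).1
  rwa [mul_div_cancel₀ r two_ne_zero] at this

theorem measure_ball_lt_top (h : IsDoublingWith μ Cd) (x : X) (r : ℝ) : μ (ball x r) < ⊤ := by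
  rcases le_or_gt r 0 with hr | hr
  · simp [ball_eq_empty.2 hr]
  · have := h x (r / 2) (half_pos hr)
    rw [mul_div_cancel₀ r two_ne_zero] at this
    exact this.2.1.trans_lt this.2.2

theorem measure_ball_two_pow_mul_le (h : IsDoublingWith μ Cd) (x : X) {r : ℝ} (hr : 0 < r)
    (n : ℕ) : μ (ball x (2 ^ n * r)) ≤ (Cd : ℝ≥0∞) ^ n * μ (ball x r) := by
  induction n with
  | zero => simp
  | succ n ih =>
    calc μ (ball x (2 ^ (n + 1) * r)) = μ (ball x (2 * (2 ^ n * r))) := by ring_nf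
      _ ≤ Cd * μ (ball x (2 ^ n * r)) := (h x _ (by positivity)).2.1
      _ ≤ Cd * ((Cd : ℝ≥0∞) ^ n * μ (ball x r)) := by gcongr
      _ = (Cd : ℝ≥0∞) ^ (n + 1) * μ (ball x r) := by ring

theorem measure_le_of_subset_ball (h : IsDoublingWith μ Cd) {x : X} {r : ℝ} (hr : 0 < r)
    (n : ℕ) {S : Set X} (hS : S ⊆ ball x (2 ^ n * r)) :
    μ S ≤ (Cd : ℝ≥0∞) ^ n * μ (ball x r) :=
  (measure_mono hS).trans (h.measure_ball_two_pow_mul_le x hr n)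

theorem isLocallyFiniteMeasure (h : IsDoublingWith μ Cd) : IsLocallyFiniteMeasure μ :=
  ⟨fun x => ⟨ball x 1, ball_mem_nhds x one_pos, h.measure_ball_lt_top x 1⟩⟩

theorem sigmaFinite (h : IsDoublingWith μ Cd) : SigmaFinite μ := by
  rcases isEmpty_or_nonempty X with _ | ⟨⟨x⟩⟩
  · rw [Measure.eq_zero_of_isEmpty μ]
    infer_instance
  · exact ⟨⟨{ set := fun n : ℕ => ball x n
              set_mem := fun _ => trivial
              finite := fun n => h.measure_ball_lt_top x n
              spanning := iUnion_ball_nat x }⟩⟩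

theorem isUnifLocDoublingMeasure (h : IsDoublingWith μ Cd) : IsUnifLocDoublingMeasure μ := by
  refine ⟨⟨Cd ^ 2, ?_⟩⟩
  filter_upwards [self_mem_nhdsWithin] with r (hr : 0 < r) x
  calc μ (closedBall x (2 * r)) ≤ (Cd : ℝ≥0∞) ^ 2 * μ (ball x r) :=
        h.measure_le_of_subset_ball hr 2 (closedBall_subset_ball (by linarith))
    _ ≤ ↑(Cd ^ 2) * μ (closedBall x r) := by
        push_cast
        gcongr
        exact ball_subset_closedBall

section Covering

variable [BorelSpace X]

theorem countable_of_pairwiseDisjoint_ball (h : IsDoublingWith μ Cd) {S : Set X} {r : X → ℝ}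
    (hr : ∀ z ∈ S, 0 < r z) (hd : S.PairwiseDisjoint fun z => ball z (r z)) : S.Countable := by
  have := h.sigmaFinite
  have hcount := Measure.countable_meas_pos_of_disjoint_iUnion (μ := μ)
    (As := fun z : S => ball (z : X) (r z)) (fun _ => measurableSet_ball) hd.subtype
  have huniv : {z : S | 0 < μ (ball (z : X) (r z))} = univ :=
    eq_univ_of_forall fun z => h.measure_ball_pos _ (hr z z.2)
  exact countable_univ_iff.1 (huniv ▸ hcount)

theorem exists_countable_ball_cover (h : IsDoublingWith μ Cd) (T : Set X) {s : ℝ} (hs : 0 < s) :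
    ∃ S ⊆ T, S.Countable ∧ (S.PairwiseDisjoint fun z => ball z (s / 4)) ∧
      T ⊆ ⋃ z ∈ S, ball z s := by
  obtain ⟨S, hST, hd, hc⟩ := Vitali.exists_disjoint_subfamily_covering_enlargement_ball T id
    (fun _ => s / 4) (s / 4) (fun _ _ => le_rfl) 4 (by norm_num)
  refine ⟨S, hST, h.countable_of_pairwiseDisjoint_ball (fun _ _ => by positivity) hd, hd,
    fun x hx => ?_⟩
  obtain ⟨z, hz, hxz⟩ := hc x hx
  rw [mul_div_cancel₀ s four_ne_zero] at hxz
  exact mem_biUnion hz (hxz (mem_ball_self (by positivity)))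

theorem secondCountableTopology (h : IsDoublingWith μ Cd) : SecondCountableTopology X := by
  refine secondCountable_of_almost_dense_set fun ε hε => ?_
  obtain ⟨S, -, hS, -, hc⟩ := h.exists_countable_ball_cover univ hε
  refine ⟨S, hS, fun x => ?_⟩
  obtain ⟨z, hz, hxz⟩ := mem_iUnion₂.1 (hc (mem_univ x))
  exact ⟨z, hz, (mem_ball.1 hxz).le⟩

theorem tsum_indicator_ball_le (h : IsDoublingWith μ Cd) {S : Set X} {s : ℝ} (hs : 0 < s)
    (hd : S.PairwiseDisjoint fun z => ball z (s / 4)) (y : X) :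
    ∑' z : S, (ball (z : X) s).indicator 1 y ≤ (Cd : ℝ≥0∞) ^ 4 := by
  have hpos := h.measure_ball_pos y (r := 2 * s) (by positivity)
  rw [← ENNReal.mul_le_mul_iff_left hpos.ne' (h.measure_ball_lt_top y (2 * s)).ne,
    ← ENNReal.tsum_mul_right]
  have hterm (z : S) : (ball (z : X) s).indicator (1 : X → ℝ≥0∞) y * μ (ball y (2 * s)) ≤
      Cd ^ 4 * μ (ball (z : X) (s / 4) ∩ ball y (2 * s)) := by
    by_cases hyz : y ∈ ball (z : X) s
    · have hdist := mem_ball.1 hyz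
      have hsub : ball (z : X) (s / 4) ⊆ ball y (2 * s) :=
        ball_subset_ball' (by rw [dist_comm]; linarith)
      rw [indicator_of_mem hyz, inter_eq_left.2 hsub, Pi.one_apply, one_mul]
      exact h.measure_le_of_subset_ball (by positivity) 4 (ball_subset_ball' (by linarith))
    · simp [indicator_of_notMem hyz]
  calc ∑' z : S, (ball (z : X) s).indicator (1 : X → ℝ≥0∞) y * μ (ball y (2 * s))
      ≤ ∑' z : S, Cd ^ 4 * μ (ball (z : X) (s / 4) ∩ ball y (2 * s)) := ENNReal.tsum_le_tsum hterm
    _ = Cd ^ 4 * ∑' z : S, μ (ball (z : X) (s / 4) ∩ ball y (2 * s)) := ENNReal.tsum_mul_left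
    _ ≤ Cd ^ 4 * μ (⋃ z : S, ball (z : X) (s / 4) ∩ ball y (2 * s)) := by
        gcongr
        exact tsum_meas_le_meas_iUnion_of_disjoint μ
          (fun _ => measurableSet_ball.inter measurableSet_ball)
          fun a b hab => (hd a.2 b.2 (Subtype.coe_ne_coe.2 hab)).mono
            inter_subset_left inter_subset_left
    _ ≤ Cd ^ 4 * μ (ball y (2 * s)) := by
        gcongr
        exact iUnion_subset fun _ => inter_subset_right

theorem mul_measure_setOf_lt_liminfMeasure_ball_le (h : IsDoublingWith μ Cd)
    (ν : ℕ → Measure X) (t : ℝ≥0∞) (R : ℝ) :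
    t * μ {x | ∃ r ∈ Ioc 0 R, t * μ (ball x r) < liminfMeasure ν (ball x r)} ≤
      (Cd : ℝ≥0∞) ^ 2 * liminfMeasure ν univ := by
  set E := {x | ∃ r ∈ Ioc 0 R, t * μ (ball x r) < liminfMeasure ν (ball x r)}
  have hE : ∀ x ∈ E, ∃ r ∈ Ioc 0 R, t * μ (ball x r) < liminfMeasure ν (ball x r) := fun _ hx => hx
  choose! r hr hlt using hE
  obtain ⟨S, hSE, hd, hc⟩ := Vitali.exists_disjoint_subfamily_covering_enlargement_ball E id r R
    (fun x hx => (hr x hx).2) 4 (by norm_num)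
  have hS : S.Countable := h.countable_of_pairwiseDisjoint_ball (fun z hz => (hr z (hSE hz)).1) hd
  have := hS.to_subtype
  have hcover : E ⊆ ⋃ z ∈ S, ball z (4 * r z) := fun x hx => by
    obtain ⟨z, hz, hxz⟩ := hc x hx
    exact mem_biUnion hz (hxz (mem_ball_self (hr x hx).1))
  have hdisj (i : ℕ) : ∑' z : S, ν i (ball (z : X) (r z)) ≤ 1 * ν i univ := by
    rw [one_mul]
    exact (tsum_meas_le_meas_iUnion_of_disjoint _ (fun _ => measurableSet_ball) hd.subtype).trans
      (measure_mono (subset_univ _))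
  calc t * μ E ≤ t * ∑' z : S, μ (ball (z : X) (4 * r z)) := by
        gcongr
        exact (measure_mono hcover).trans (measure_biUnion_le μ hS _)
    _ ≤ t * ∑' z : S, (Cd : ℝ≥0∞) ^ 2 * μ (ball (z : X) (r z)) := by
        gcongr with z
        exact h.measure_le_of_subset_ball (hr z (hSE z.2)).1 2 (ball_subset_ball (by norm_num))
    _ = (Cd : ℝ≥0∞) ^ 2 * ∑' z : S, t * μ (ball (z : X) (r z)) := by
        rw [ENNReal.tsum_mul_left, ENNReal.tsum_mul_left, mul_left_comm]
    _ ≤ (Cd : ℝ≥0∞) ^ 2 * ∑' z : S, liminfMeasure ν (ball (z : X) (r z)) := by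
        gcongr with z
        exact (hlt z (hSE z.2)).le
    _ ≤ (Cd : ℝ≥0∞) ^ 2 * liminfMeasure ν univ := by
        gcongr
        simpa using tsum_liminfMeasure_le ENNReal.one_ne_top hdisj

theorem ae_exists_liminfMeasure_ball_le (h : IsDoublingWith μ Cd) {ν : ℕ → Measure X}
    (hν : liminfMeasure ν univ ≠ ⊤) (R : ℝ) :
    ∀ᵐ x ∂μ, ∃ K : ℕ, ∀ r ∈ Ioc 0 R, liminfMeasure ν (ball x r) ≤ K * μ (ball x r) := by
  rw [ae_iff]
  by_contra hne
  obtain ⟨K, hK⟩ := ENNReal.exists_nat_mul_gt hne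
    (by finiteness : (Cd : ℝ≥0∞) ^ 2 * liminfMeasure ν univ ≠ ⊤)
  refine hK.not_ge (le_trans ?_ (h.mul_measure_setOf_lt_liminfMeasure_ball_le ν K R))
  gcongr
  simp only [not_exists, not_forall, not_le]
  intro hx
  simpa using hx K

end Covering

end IsDoublingWith

section MeanOscillation

variable {X : Type u} [MeasurableSpace X] {μ : Measure X}
  {E : Type*} [NormedAddCommGroup E] [NormedSpace ℝ E] {f : X → E} {S : Set X}

/-- The mean oscillation `∫_S |f - f_S| dμ` of `f` on `S`, not divided by `μ S`. -/
def meanOsc (μ : Measure X) (f : X → E) (S : Set X) : ℝ≥0∞ :=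
  ∫⁻ y in S, ‖f y - ⨍ z in S, f z ∂μ‖ₑ ∂μ

theorem setLIntegral_enorm_sub_le_meanOsc_add {m : Measure X} (hm : m ≤ μ) (f : X → E) (S : Set X)
    (a : E) :
    ∫⁻ y in S, ‖f y - a‖ₑ ∂m ≤ meanOsc μ f S + ‖(⨍ y in S, f y ∂μ) - a‖ₑ * m S := by
  calc ∫⁻ y in S, ‖f y - a‖ₑ ∂m
      ≤ ∫⁻ y in S, (‖f y - ⨍ z in S, f z ∂μ‖ₑ + ‖(⨍ z in S, f z ∂μ) - a‖ₑ) ∂m :=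
        lintegral_mono fun y => by
          simpa using enorm_add_le (f y - ⨍ z in S, f z ∂μ) ((⨍ z in S, f z ∂μ) - a)
    _ = ∫⁻ y in S, ‖f y - ⨍ z in S, f z ∂μ‖ₑ ∂m + ‖(⨍ y in S, f y ∂μ) - a‖ₑ * m S := by
        rw [lintegral_add_right _ measurable_const, setLIntegral_const]
    _ ≤ meanOsc μ f S + ‖(⨍ y in S, f y ∂μ) - a‖ₑ * m S := by
        gcongr
        exact lintegral_mono' (Measure.restrict_mono_measure hm S) le_rfl

variable [CompleteSpace E]

theorem enorm_setAverage_sub_mul_measure_le (hf : IntegrableOn f S μ) (hS : μ S ≠ ⊤) (a : E) :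
    ‖(⨍ y in S, f y ∂μ) - a‖ₑ * μ S ≤ ∫⁻ y in S, ‖f y - a‖ₑ ∂μ := by
  have heq : μ.real S • ((⨍ y in S, f y ∂μ) - a) = ∫ y in S, (f y - a) ∂μ := by
    rw [smul_sub, measure_smul_setAverage f hS, integral_sub hf (integrableOn_const hS),
      setIntegral_const]
  calc ‖(⨍ y in S, f y ∂μ) - a‖ₑ * μ S = ‖∫ y in S, (f y - a) ∂μ‖ₑ := by
        rw [← heq, enorm_smul, Real.enorm_of_nonneg measureReal_nonneg, ofReal_measureReal hS,
          mul_comm]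
    _ ≤ ∫⁻ y in S, ‖f y - a‖ₑ ∂μ := enorm_integral_le_lintegral_enorm _

theorem enorm_setAverage_sub_setAverage_le {T : Set X} (hST : S ⊆ T) (hf : IntegrableOn f T μ)
    (hT₀ : μ T ≠ 0) (hT : μ T ≠ ⊤) {c a : ℝ≥0∞} (hc : μ T ≤ c * μ S)
    (ha : meanOsc μ f T ≤ a * μ T) :
    ‖(⨍ y in S, f y ∂μ) - ⨍ y in T, f y ∂μ‖ₑ ≤ c * a := by
  rw [← ENNReal.mul_le_mul_iff_left hT₀ hT]
  calc ‖(⨍ y in S, f y ∂μ) - ⨍ y in T, f y ∂μ‖ₑ * μ T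
      ≤ ‖(⨍ y in S, f y ∂μ) - ⨍ y in T, f y ∂μ‖ₑ * (c * μ S) := by gcongr
    _ = c * (‖(⨍ y in S, f y ∂μ) - ⨍ y in T, f y ∂μ‖ₑ * μ S) := by ring
    _ ≤ c * ∫⁻ y in S, ‖f y - ⨍ z in T, f z ∂μ‖ₑ ∂μ := by
        gcongr
        exact enorm_setAverage_sub_mul_measure_le (hf.mono_set hST)
          (measure_ne_top_of_subset hST hT) _
    _ ≤ c * meanOsc μ f T := by
        gcongr
        exact lintegral_mono_set hST
    _ ≤ c * a * μ T := by
        rw [mul_assoc]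
        gcongr

theorem meanOsc_le_add_two_mul {g : X → E} (hf : IntegrableOn f S μ) (hg : IntegrableOn g S μ)
    (hS : μ S ≠ ⊤) :
    meanOsc μ f S ≤ meanOsc μ g S + 2 * ∫⁻ y in S, ‖g y - f y‖ₑ ∂μ := by
  set a := ⨍ y in S, f y ∂μ
  set b := ⨍ y in S, g y ∂μ
  have hab : ‖b - a‖ₑ * μ S ≤ ∫⁻ y in S, ‖g y - f y‖ₑ ∂μ := by
    have havg : ⨍ y in S, (g - f) y ∂μ = b - a := by
      simp only [Pi.sub_apply, a, b, setAverage_eq]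
      rw [integral_sub hg hf, smul_sub]
    simpa [← havg] using enorm_setAverage_sub_mul_measure_le (hg.sub hf) hS 0
  calc meanOsc μ f S
      ≤ ∫⁻ y in S, (‖g y - f y‖ₑ + ‖g y - a‖ₑ) ∂μ := by
        refine lintegral_mono fun y => ?_
        rw [enorm_sub_rev (g y) (f y)]
        simpa using enorm_add_le (f y - g y) (g y - a)
    _ = ∫⁻ y in S, ‖g y - f y‖ₑ ∂μ + ∫⁻ y in S, ‖g y - a‖ₑ ∂μ :=
        lintegral_add_left' (hg.sub hf).aestronglyMeasurable.enorm _
    _ ≤ ∫⁻ y in S, ‖g y - f y‖ₑ ∂μ + (meanOsc μ g S + ∫⁻ y in S, ‖g y - f y‖ₑ ∂μ) := by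
        gcongr
        exact (setLIntegral_enorm_sub_le_meanOsc_add le_rfl g S a).trans (by gcongr)
    _ = meanOsc μ g S + 2 * ∫⁻ y in S, ‖g y - f y‖ₑ ∂μ := by ring

end MeanOscillation

section Pointwise

variable {X : Type u} [PseudoMetricSpace X] [MeasurableSpace X]
  {E : Type*} [NormedAddCommGroup E] [NormedSpace ℝ E]
  {μ : Measure X} {Cd : ℝ≥0} {u : X → E} {x : X}

/-- The `1`-Poincaré inequality `∫_B |u - u_B| dμ ≤ C r ν(B)` for `u` on all balls `B` of radius
`r`, with the lower limit of the measures `ν i` in the role of the variation of `u`. -/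
def HasPoincareBound (μ : Measure X) (ν : ℕ → Measure X) (C : ℝ≥0) (u : X → E) : Prop :=
  ∀ (x : X) (r : ℝ), 0 < r →
    meanOsc μ u (ball x r) ≤ C * ENNReal.ofReal r * liminfMeasure ν (ball x r)

theorem HasPoincareBound.setLIntegral_inter_ball_le [BorelSpace X] {ν : ℕ → Measure X} {C : ℝ≥0}
    (hu : HasPoincareBound μ ν C u) (h : IsDoublingWith μ Cd) {r s : ℝ} (hs : 0 < s) (hsr : s ≤ r)
    {a : E} {k : ℝ≥0∞} (hk : ∀ z ∈ ball x r, ‖(⨍ y in ball z s, u y ∂μ) - a‖ₑ ≤ k) (A : Set X) :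
    ∫⁻ y in A ∩ ball x r, ‖u y - a‖ₑ ∂μ ≤
      (Cd : ℝ≥0∞) ^ 4 * (C * ENNReal.ofReal s * liminfMeasure ν (ball x (2 * r)) +
        k * μ (A ∩ ball x r)) := by
  obtain ⟨S, hSx, hS, hd, hc⟩ := h.exists_countable_ball_cover (ball x r) hs
  have := hS.to_subtype
  have hsub (z : S) : ball (z : X) s ⊆ ball x (2 * r) :=
    ball_subset_ball' (by linarith [mem_ball.1 (hSx z.2)])
  have hoverlap {W : Set X} (hW : ∀ z : S, ball (z : X) s ⊆ W) (m : Measure X) :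
      ∑' z : S, m (ball (z : X) s) ≤ (Cd : ℝ≥0∞) ^ 4 * m W :=
    tsum_measure_le_mul_of_tsum_indicator_le (fun _ => measurableSet_ball) hW
      (h.tsum_indicator_ball_le hs hd) m
  set m := μ.restrict (A ∩ ball x r) with hm
  have hball (z : S) : ∫⁻ y in ball (z : X) s, ‖u y - a‖ₑ ∂m ≤
      C * ENNReal.ofReal s * liminfMeasure ν (ball (z : X) s) + k * m (ball (z : X) s) :=
    (setLIntegral_enorm_sub_le_meanOsc_add Measure.restrict_le_self u _ a).trans
      (add_le_add (hu z s hs) (by gcongr; exact hk z (hSx z.2)))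
  calc ∫⁻ y, ‖u y - a‖ₑ ∂m
      ≤ ∫⁻ y in ⋃ z : S, ball (z : X) s, ‖u y - a‖ₑ ∂m := by
        rw [hm, Measure.restrict_restrict (.iUnion fun _ => measurableSet_ball)]
        refine lintegral_mono_set fun y hy => ⟨?_, hy⟩
        simpa only [iUnion_coe_set] using hc hy.2
    _ ≤ ∑' z : S, ∫⁻ y in ball (z : X) s, ‖u y - a‖ₑ ∂m := lintegral_iUnion_le _ _
    _ ≤ ∑' z : S, (C * ENNReal.ofReal s * liminfMeasure ν (ball (z : X) s) +
          k * m (ball (z : X) s)) := ENNReal.tsum_le_tsum hball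
    _ = C * ENNReal.ofReal s * ∑' z : S, liminfMeasure ν (ball (z : X) s) +
          k * ∑' z : S, m (ball (z : X) s) := by
        rw [ENNReal.tsum_add, ENNReal.tsum_mul_left, ENNReal.tsum_mul_left]
    _ ≤ C * ENNReal.ofReal s * ((Cd : ℝ≥0∞) ^ 4 * liminfMeasure ν (ball x (2 * r))) +
          k * ((Cd : ℝ≥0∞) ^ 4 * m univ) := by
        gcongr
        · exact tsum_liminfMeasure_le (by finiteness) fun i => hoverlap hsub (ν i)
        · exact hoverlap (fun _ => subset_univ _) m
    _ = (Cd : ℝ≥0∞) ^ 4 * (C * ENNReal.ofReal s * liminfMeasure ν (ball x (2 * r)) +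
          k * μ (A ∩ ball x r)) := by
        rw [hm, Measure.restrict_apply_univ]
        ring

variable [CompleteSpace E]

namespace IsDoublingWith

theorem ae_tendsto_setAverage_ball [BorelSpace X] (h : IsDoublingWith μ Cd)
    (hu : ∀ x r, IntegrableOn u (ball x r) μ) :
    ∀ᵐ x ∂μ, Tendsto (fun r => ⨍ y in ball x r, u y ∂μ) (𝓝[>] 0) (𝓝 (u x)) := by
  have := h.secondCountableTopology
  have := h.isUnifLocDoublingMeasure
  have := h.isLocallyFiniteMeasure
  have hloc : LocallyIntegrable u μ := fun x => ⟨ball x 1, ball_mem_nhds x one_pos, hu x 1⟩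
  filter_upwards [(IsUnifLocDoublingMeasure.vitaliFamily μ 1).ae_tendsto_lintegral_enorm_sub_div
    hloc] with x hx
  have hclosed : Tendsto (fun r => (∫⁻ y in closedBall x r, ‖u y - u x‖ₑ ∂μ) / μ (closedBall x r))
      (𝓝[>] 0) (𝓝 0) := by
    refine hx.comp (IsUnifLocDoublingMeasure.tendsto_closedBall_filterAt μ (fun _ => x) id
      tendsto_id ?_)
    filter_upwards [self_mem_nhdsWithin] with r (hr : 0 < r)
    exact mem_closedBall_self (by simpa using hr.le)
  rw [tendsto_iff_edist_tendsto_0]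
  refine tendsto_of_tendsto_of_tendsto_of_le_of_le' tendsto_const_nhds
    (by simpa using ENNReal.Tendsto.const_mul hclosed (.inr (ENNReal.coe_ne_top (r := Cd))))
    (.of_forall fun _ => zero_le) ?_
  filter_upwards [self_mem_nhdsWithin] with r (hr : 0 < r)
  have hcb : closedBall x r ⊆ ball x (2 * r) := closedBall_subset_ball (by linarith)
  have hpos : μ (closedBall x r) ≠ 0 :=
    ((h.measure_ball_pos x hr).trans_le (measure_mono ball_subset_closedBall)).ne'
  rw [edist_eq_enorm_sub, ← mul_div_assoc, ENNReal.le_div_iff_mul_le (.inl hpos)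
    (.inl (measure_ne_top_of_subset hcb (h.measure_ball_lt_top x _).ne))]
  calc ‖(⨍ y in ball x r, u y ∂μ) - u x‖ₑ * μ (closedBall x r)
      ≤ ‖(⨍ y in ball x r, u y ∂μ) - u x‖ₑ * (Cd * μ (ball x r)) := by
        gcongr
        exact (measure_mono hcb).trans (h x r hr).2.1
    _ = Cd * (‖(⨍ y in ball x r, u y ∂μ) - u x‖ₑ * μ (ball x r)) := mul_left_comm _ _ _
    _ ≤ Cd * ∫⁻ y in closedBall x r, ‖u y - u x‖ₑ ∂μ := by
        gcongr
        exact (enorm_setAverage_sub_mul_measure_le (hu x r) (h.measure_ball_lt_top x r).ne _).trans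
          (lintegral_mono_set ball_subset_closedBall)

theorem enorm_setAverage_ball_sub_le_of_tendsto (h : IsDoublingWith μ Cd) {R : ℝ} {D : ℝ≥0} {a : E}
    (hint : IntegrableOn u (ball x R) μ)
    (hosc : ∀ r ∈ Ioc 0 R, meanOsc μ u (ball x r) ≤ D * ENNReal.ofReal r * μ (ball x r))
    (hlim : Tendsto (fun r => ⨍ y in ball x r, u y ∂μ) (𝓝[>] 0) (𝓝 a)) {r : ℝ} (hr : r ∈ Ioc 0 R) :
    ‖(⨍ y in ball x r, u y ∂μ) - a‖ₑ ≤ 2 * (Cd * (D * ENNReal.ofReal r)) := by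
  have hr0 := hr.1
  have hmem (k : ℕ) : r / 2 ^ k ∈ Ioc 0 R :=
    ⟨by positivity, (div_le_self hr0.le (one_le_pow₀ one_le_two)).trans hr.2⟩
  have hhalf (k : ℕ) : r / 2 ^ k = 2 * (r / 2 ^ (k + 1)) := by field_simp; ring
  have hstep (k : ℕ) : edist (⨍ y in ball x (r / 2 ^ k), u y ∂μ)
      (⨍ y in ball x (r / 2 ^ (k + 1)), u y ∂μ) ≤ Cd * (D * ENNReal.ofReal r) / 2 ^ k := by
    rw [edist_comm, edist_eq_enorm_sub]
    refine (enorm_setAverage_sub_setAverage_le (ball_subset_ball ?_)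
      (hint.mono_set (ball_subset_ball (hmem k).2)) (h.measure_ball_pos x (hmem k).1).ne'
      (h.measure_ball_lt_top x _).ne (c := Cd) ?_ (hosc _ (hmem k))).trans_eq ?_
    · linarith [hhalf k, (hmem (k + 1)).1]
    · rw [hhalf k]
      exact (h x _ (hmem (k + 1)).1).2.1
    · rw [ENNReal.ofReal_div_of_pos (by positivity), ENNReal.ofReal_pow two_pos.le,
        ENNReal.ofReal_ofNat]
      simp only [mul_div_assoc]
  have hradius : Tendsto (fun k : ℕ => r / 2 ^ k) atTop (𝓝[>] 0) :=
    tendsto_nhdsWithin_iff.2 ⟨tendsto_const_nhds.div_atTop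
      (tendsto_pow_atTop_atTop_of_one_lt one_lt_two), .of_forall fun k => (hmem k).1⟩
  simpa [edist_eq_enorm_sub] using
    edist_le_of_edist_le_geometric_two_of_tendsto₀ _ hstep (hlim.comp hradius)

theorem enorm_setAverage_ball_div_two_pow_sub_le (h : IsDoublingWith μ Cd) {R : ℝ} {D : ℝ≥0} {a : E}
    (hint : IntegrableOn u (ball x R) μ)
    (hosc : ∀ r ∈ Ioc 0 R, meanOsc μ u (ball x r) ≤ D * ENNReal.ofReal r * μ (ball x r))
    (hlim : Tendsto (fun r => ⨍ y in ball x r, u y ∂μ) (𝓝[>] 0) (𝓝 a)) {r : ℝ} (hr : 0 < r)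
    (hrR : 2 * r ≤ R) (n : ℕ) {z : X} (hz : z ∈ ball x r) :
    ‖(⨍ y in ball z (r / 2 ^ n), u y ∂μ) - a‖ₑ ≤
      (Cd ^ (n + 2) + 2 * Cd) * (D * ENNReal.ofReal (2 * r)) := by
  have hdist := mem_ball.1 hz
  have hmem : 2 * r ∈ Ioc 0 R := ⟨by positivity, hrR⟩
  have hsmall : r / 2 ^ n ≤ r := div_le_self hr.le (one_le_pow₀ one_le_two)
  have hdouble : μ (ball x (2 * r)) ≤ (Cd : ℝ≥0∞) ^ (n + 2) * μ (ball z (r / 2 ^ n)) := by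
    refine h.measure_le_of_subset_ball (by positivity) (n + 2) (ball_subset_ball' ?_)
    have : (2 : ℝ) ^ (n + 2) * (r / 2 ^ n) = 4 * r := by field_simp; ring
    rw [this, dist_comm]
    linarith
  have hnear := enorm_setAverage_sub_setAverage_le (ball_subset_ball' (by linarith))
    (hint.mono_set (ball_subset_ball hrR)) (h.measure_ball_pos x hmem.1).ne'
    (h.measure_ball_lt_top x _).ne hdouble (hosc _ hmem)
  calc ‖(⨍ y in ball z (r / 2 ^ n), u y ∂μ) - a‖ₑ
      ≤ ‖(⨍ y in ball z (r / 2 ^ n), u y ∂μ) - ⨍ y in ball x (2 * r), u y ∂μ‖ₑ +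
          ‖(⨍ y in ball x (2 * r), u y ∂μ) - a‖ₑ := by
        simpa only [edist_eq_enorm_sub] using edist_triangle _ (⨍ y in ball x (2 * r), u y ∂μ) a
    _ ≤ Cd ^ (n + 2) * (D * ENNReal.ofReal (2 * r)) +
          2 * (Cd * (D * ENNReal.ofReal (2 * r))) :=
        add_le_add hnear (h.enorm_setAverage_ball_sub_le_of_tendsto hint hosc hlim hmem)
    _ = (Cd ^ (n + 2) + 2 * Cd) * (D * ENNReal.ofReal (2 * r)) := by ring

end IsDoublingWith

namespace HasPoincareBound

variable [BorelSpace X] {ν : ℕ → Measure X} {C K : ℝ≥0} {R : ℝ} {a : E}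

theorem setLIntegral_inter_ball_le_of_tendsto (hu : HasPoincareBound μ ν C u)
    (h : IsDoublingWith μ Cd) (hint : IntegrableOn u (ball x R) μ)
    (hK : ∀ r ∈ Ioc 0 R, liminfMeasure ν (ball x r) ≤ K * μ (ball x r))
    (hlim : Tendsto (fun r => ⨍ y in ball x r, u y ∂μ) (𝓝[>] 0) (𝓝 a)) {r : ℝ} (hr : 0 < r)
    (hrR : 2 * r ≤ R) (n : ℕ) (A : Set X) :
    ∫⁻ y in A ∩ ball x r, ‖u y - a‖ₑ ∂μ ≤ ENNReal.ofReal r *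
      (Cd ^ 5 * C * K * 2⁻¹ ^ n * μ (ball x r) +
        Cd ^ 4 * (Cd ^ (n + 2) + 2 * Cd) * (C * K * 2) * μ (A ∩ ball x r)) := by
  have hosc : ∀ r ∈ Ioc 0 R, meanOsc μ u (ball x r) ≤ ↑(C * K) * ENNReal.ofReal r * μ (ball x r) :=
    fun r hr => calc
      meanOsc μ u (ball x r) ≤ C * ENNReal.ofReal r * liminfMeasure ν (ball x r) := hu x r hr.1
      _ ≤ C * ENNReal.ofReal r * (K * μ (ball x r)) := by
        gcongr
        exact hK r hr
      _ = ↑(C * K) * ENNReal.ofReal r * μ (ball x r) := by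
        push_cast
        ring
  have hdouble : liminfMeasure ν (ball x (2 * r)) ≤ K * (Cd * μ (ball x r)) := by
    refine (hK _ ⟨by positivity, hrR⟩).trans ?_
    gcongr
    exact (h x r hr).2.1
  have hs : ENNReal.ofReal (r / 2 ^ n) = 2⁻¹ ^ n * ENNReal.ofReal r := by
    rw [ENNReal.ofReal_div_of_pos (by positivity), ENNReal.ofReal_pow two_pos.le,
      ENNReal.ofReal_ofNat, ENNReal.div_eq_inv_mul, ENNReal.inv_pow]
  calc ∫⁻ y in A ∩ ball x r, ‖u y - a‖ₑ ∂μ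
      ≤ Cd ^ 4 * (C * ENNReal.ofReal (r / 2 ^ n) * liminfMeasure ν (ball x (2 * r)) +
          (Cd ^ (n + 2) + 2 * Cd) * (↑(C * K) * ENNReal.ofReal (2 * r)) * μ (A ∩ ball x r)) :=
        hu.setLIntegral_inter_ball_le h (by positivity)
          (div_le_self hr.le (one_le_pow₀ one_le_two))
          (fun _ => h.enorm_setAverage_ball_div_two_pow_sub_le hint hosc hlim hr hrR n) A
    _ ≤ Cd ^ 4 * (C * (2⁻¹ ^ n * ENNReal.ofReal r) * (K * (Cd * μ (ball x r))) +
          (Cd ^ (n + 2) + 2 * Cd) * (↑(C * K) * (2 * ENNReal.ofReal r)) * μ (A ∩ ball x r)) := by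
        rw [hs, ENNReal.ofReal_mul two_pos.le, ENNReal.ofReal_ofNat]
        gcongr
    _ = ENNReal.ofReal r * (Cd ^ 5 * C * K * 2⁻¹ ^ n * μ (ball x r) +
          Cd ^ 4 * (Cd ^ (n + 2) + 2 * Cd) * (C * K * 2) * μ (A ∩ ball x r)) := by
        push_cast
        ring

theorem tendsto_setLIntegral_inter_ball_div (hu : HasPoincareBound μ ν C u)
    (h : IsDoublingWith μ Cd) (hR : 0 < R) (hint : IntegrableOn u (ball x R) μ)
    (hK : ∀ r ∈ Ioc 0 R, liminfMeasure ν (ball x r) ≤ K * μ (ball x r))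
    (hlim : Tendsto (fun r => ⨍ y in ball x r, u y ∂μ) (𝓝[>] 0) (𝓝 a)) {A : Set X}
    (hA : DensityZeroAt μ A x) :
    Tendsto (fun r => (∫⁻ y in A ∩ ball x r, ‖u y - a‖ₑ ∂μ) / (ENNReal.ofReal r * μ (ball x r)))
      (𝓝[>] 0) (𝓝 0) := by
  set p : ℕ → ℝ≥0∞ := fun n => Cd ^ 5 * C * K * 2⁻¹ ^ n
  set q : ℕ → ℝ≥0∞ := fun n => Cd ^ 4 * (Cd ^ (n + 2) + 2 * Cd) * (C * K * 2)
  have hbound (n : ℕ) (r : ℝ) (hr : r ∈ Ioo 0 (R / 2)) :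
      (∫⁻ y in A ∩ ball x r, ‖u y - a‖ₑ ∂μ) / (ENNReal.ofReal r * μ (ball x r)) ≤
        p n + q n * (μ (A ∩ ball x r) / μ (ball x r)) := by
    refine ENNReal.div_le_of_le_mul ?_
    calc ∫⁻ y in A ∩ ball x r, ‖u y - a‖ₑ ∂μ
        ≤ ENNReal.ofReal r * (p n * μ (ball x r) + q n * μ (A ∩ ball x r)) :=
          hu.setLIntegral_inter_ball_le_of_tendsto h hint hK hlim hr.1 (by linarith [hr.2]) n A
      _ = ENNReal.ofReal r * (p n * μ (ball x r) +
            q n * (μ (A ∩ ball x r) / μ (ball x r) * μ (ball x r))) := by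
          rw [ENNReal.div_mul_cancel (h.measure_ball_pos x hr.1).ne' (h.measure_ball_lt_top x r).ne]
      _ = (p n + q n * (μ (A ∩ ball x r) / μ (ball x r))) *
            (ENNReal.ofReal r * μ (ball x r)) := by ring
  have hp : Tendsto p atTop (𝓝 0) := by
    simpa only [mul_zero] using ENNReal.Tendsto.const_mul
      (ENNReal.tendsto_pow_atTop_nhds_zero_of_lt_one (by norm_num : (2⁻¹ : ℝ≥0∞) < 1))
      (.inr (by finiteness : (Cd : ℝ≥0∞) ^ 5 * C * K ≠ ⊤))
  refine ENNReal.tendsto_nhds_zero.2 fun ε hε => ?_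
  obtain ⟨n, hn⟩ := (hp.eventually (gt_mem_nhds hε)).exists
  have hlimit : Tendsto (fun r => p n + q n * (μ (A ∩ ball x r) / μ (ball x r))) (𝓝[>] 0)
      (𝓝 (p n)) := by
    simpa only [mul_zero, add_zero] using tendsto_const_nhds.add
      (ENNReal.Tendsto.const_mul hA (.inr (by finiteness : q n ≠ ⊤)))
  filter_upwards [hlimit.eventually (gt_mem_nhds hn), Ioo_mem_nhdsGT (half_pos hR)] with r hlt hr
  exact (hbound n r hr).trans hlt.le

theorem ae_tendsto_setLIntegral_inter_ball_div (hu : HasPoincareBound μ ν C u)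
    (h : IsDoublingWith μ Cd) (hint : ∀ x r, IntegrableOn u (ball x r) μ)
    (hν : liminfMeasure ν univ ≠ ⊤) :
    ∀ᵐ x ∂μ, ∀ A, DensityZeroAt μ A x →
      Tendsto (fun r => (∫⁻ y in A ∩ ball x r, ‖u y - u x‖ₑ ∂μ) /
        (ENNReal.ofReal r * μ (ball x r))) (𝓝[>] 0) (𝓝 0) := by
  filter_upwards [h.ae_exists_liminfMeasure_ball_le hν 1, h.ae_tendsto_setAverage_ball hint]
    with x ⟨K, hK⟩ hlim A hA
  exact hu.tendsto_setLIntegral_inter_ball_div h one_pos (hint x 1) (K := K)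
    (by simpa using hK) hlim hA

end HasPoincareBound

end Pointwise

theorem liminf_nhdsGT_eq_liminf_comap_ratCast {α : Type*} [CompleteLinearOrder α] [DenselyOrdered α]
    {f : ℝ → α} {a : ℝ} (hf : ∀ r > a, ∀ c > f r, ∀ᶠ t in 𝓝[<] r, f t < c) :
    liminf f (𝓝[>] a) = liminf (fun q : ℚ => f q) (comap (↑) (𝓝[>] a)) := by
  refine le_antisymm (liminf_le_liminf_of_le (f := 𝓝[>] a) (u := f) map_comap_le)
    (le_of_forall_lt_imp_le_of_dense fun c hc => ?_)
  obtain ⟨T, hT, hTc⟩ := mem_comap.1 (eventually_lt_of_lt_liminf hc)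
  obtain ⟨δ, hδ, hδT⟩ := mem_nhdsGT_iff_exists_Ioo_subset.1 hT
  refine le_liminf_of_le (by isBoundedDefault) ?_
  filter_upwards [Ioo_mem_nhdsGT hδ] with r hr
  by_contra! hlt
  obtain ⟨b, hb, hbr⟩ := (mem_nhdsLT_iff_exists_Ioo_subset' hr.1).1 (hf r hr.1 c hlt)
  obtain ⟨q, hq, hqr⟩ := exists_rat_btwn (max_lt hr.1 hb)
  obtain ⟨haq, hbq⟩ := max_lt_iff.1 hq
  exact lt_asymm (hbr ⟨hbq, hqr⟩) (hTc (hδT ⟨haq, hqr.trans hr.2⟩))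

section LipConst

variable {X : Type u} [PseudoMetricSpace X] {v : X → ℝ}

/-- The difference quotient `r⁻¹ sup_{y ∈ B(x,r)} |v y - v x|`, whose lower limit as `r → 0` is
`lipConst v x`. -/
def oscQuotient (v : X → ℝ) (x : X) (r : ℝ) : ℝ≥0∞ :=
  ⨆ y ∈ ball x r, ENNReal.ofReal (|v y - v x| / r)

theorem oscQuotient_le_ofReal_div_mul {s t : ℝ} (ht : 0 < t) (hts : t ≤ s) (x : X) :
    oscQuotient v x t ≤ ENNReal.ofReal (s / t) * oscQuotient v x s := by
  have hs := ht.trans_le hts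
  refine iSup₂_le fun y hy => ?_
  calc ENNReal.ofReal (|v y - v x| / t)
      = ENNReal.ofReal (s / t) * ENNReal.ofReal (|v y - v x| / s) := by
        rw [← ENNReal.ofReal_mul (by positivity)]
        congr 1
        field_simp
    _ ≤ ENNReal.ofReal (s / t) * oscQuotient v x s := by
        gcongr
        exact le_iSup₂_of_le y (ball_subset_ball hts hy) le_rfl

theorem eventually_nhdsLT_oscQuotient_lt {x : X} {r : ℝ} (hr : 0 < r) {c : ℝ≥0∞}
    (hc : oscQuotient v x r < c) : ∀ᶠ t in 𝓝[<] r, oscQuotient v x t < c := by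
  have hquot : Tendsto (fun t => ENNReal.ofReal (r / t)) (𝓝[<] r) (𝓝 1) := by
    have hcont : ContinuousAt (fun t => ENNReal.ofReal (r / t)) r :=
      ENNReal.continuous_ofReal.continuousAt.comp (continuousAt_const.div continuousAt_id hr.ne')
    simpa [hr.ne'] using hcont.tendsto.mono_left nhdsWithin_le_nhds
  have hlim := ENNReal.Tendsto.mul_const hquot (.inr hc.ne_top)
  rw [one_mul] at hlim
  filter_upwards [hlim.eventually (gt_mem_nhds hc), Ioo_mem_nhdsLT hr] with t hlt ht
  exact (oscQuotient_le_ofReal_div_mul ht.1 ht.2.le x).trans_lt hlt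

theorem lowerSemicontinuous_oscQuotient (hv : Continuous v) (r : ℝ) :
    LowerSemicontinuous fun x => oscQuotient v x r := by
  intro x c hc
  obtain ⟨y, hy⟩ := lt_iSup_iff.1 hc
  obtain ⟨hyx, hy⟩ := lt_iSup_iff.1 hy
  have hcont : Continuous fun z => ENNReal.ofReal (|v y - v z| / r) :=
    ENNReal.continuous_ofReal.comp (by fun_prop)
  filter_upwards [hcont.continuousAt.eventually (lt_mem_nhds hy),
    isOpen_ball.mem_nhds (mem_ball_comm.1 hyx)] with z hz hyz
  exact hz.trans_le (le_iSup₂_of_le y (mem_ball_comm.1 hyz) le_rfl)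

theorem measurable_lipConst [MeasurableSpace X] [BorelSpace X] (hv : Continuous v) :
    Measurable (lipConst v) := by
  have hrat : lipConst v =
      fun x => liminf (fun q : ℚ => oscQuotient v x q) (comap (↑) (𝓝[>] (0 : ℝ))) :=
    funext fun x => liminf_nhdsGT_eq_liminf_comap_ratCast
      fun _ hr _ hc => eventually_nhdsLT_oscQuotient_lt hr hc
  obtain ⟨s, hs⟩ := (comap ((↑) : ℚ → ℝ) (𝓝[>] 0)).exists_antitone_basis
  rw [hrat]
  exact .liminf' (fun q => (lowerSemicontinuous_oscQuotient hv q).measurable)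
    ⟨hs.toHasBasis, to_countable _⟩ fun n => to_countable (s n)

theorem lipConst_le_of_lipschitzOnWith {L : ℝ≥0} {U : Set X} {x : X} (hL : LipschitzOnWith L v U)
    (hU : U ∈ 𝓝 x) : lipConst v x ≤ L := by
  obtain ⟨δ, hδ, hδU⟩ := Metric.mem_nhds_iff.1 hU
  refine liminf_le_of_frequently_le' (Eventually.frequently ?_)
  filter_upwards [Ioo_mem_nhdsGT hδ] with r hr
  refine iSup₂_le fun y hy => ENNReal.ofReal_le_of_le_toReal ?_
  rw [ENNReal.coe_toReal, div_le_iff₀ hr.1, ← Real.dist_eq]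
  refine (hL.dist_le_mul y (hδU (ball_subset_ball hr.2.le hy)) x (mem_of_mem_nhds hU)).trans ?_
  gcongr
  exact (mem_ball.1 hy).le

theorem ofReal_abs_deriv_le_lipConst {γ : ℝ → X} {s : Set ℝ} {t d : ℝ}
    (hγ : LipschitzOnWith 1 γ s) (hs : s ∈ 𝓝 t) (hd : HasDerivAt (v ∘ γ) d t) :
    ENNReal.ofReal |d| ≤ lipConst v (γ t) := by
  -- `γ (t + l * r)` lies in the open ball of radius `r` only for `l < 1`.
  suffices h : ∀ l ∈ Ioo (0 : ℝ) 1, ENNReal.ofReal (l * |d|) ≤ lipConst v (γ t) by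
    have hcont : ContinuousAt (fun l => ENNReal.ofReal (l * |d|)) 1 :=
      ENNReal.continuous_ofReal.continuousAt.comp (by fun_prop)
    have hlim : Tendsto (fun l => ENNReal.ofReal (l * |d|)) (𝓝[<] 1) (𝓝 (ENNReal.ofReal |d|)) := by
      simpa only [one_mul] using hcont.tendsto.mono_left nhdsWithin_le_nhds
    exact le_of_tendsto hlim (eventually_of_mem (Ioo_mem_nhdsLT one_pos) h)
  intro l ⟨hl₀, hl₁⟩
  have hmul : Tendsto (l * ·) (𝓝[>] 0) (𝓝[>] 0) := by
    refine tendsto_nhdsWithin_iff.2 ⟨?_, eventually_of_mem self_mem_nhdsWithin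
      fun r (hr : 0 < r) => mul_pos hl₀ hr⟩
    exact (continuous_const_mul l).tendsto' 0 0 (mul_zero l) |>.mono_left nhdsWithin_le_nhds
  have hslope := (ENNReal.continuous_ofReal.tendsto _).comp
    ((hd.tendsto_slope_zero_right.comp hmul).abs.const_mul l)
  have hmem : ∀ᶠ r in 𝓝[>] 0, t + l * r ∈ s := by
    have hlim := (tendsto_nhds_of_tendsto_nhdsWithin hmul).const_add t
    rw [add_zero] at hlim
    exact hlim hs
  rw [← hslope.liminf_eq]
  refine liminf_le_liminf ?_
  filter_upwards [self_mem_nhdsWithin, hmem] with r (hr : 0 < r) hrs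
  have hball : γ (t + l * r) ∈ ball (γ t) r := by
    have hdist := hγ.dist_le_mul _ hrs _ (mem_of_mem_nhds hs)
    rw [NNReal.coe_one, one_mul, Real.dist_eq, add_sub_cancel_left, abs_of_pos (by positivity)]
      at hdist
    exact hdist.trans_lt (mul_lt_of_lt_one_left hr hl₁)
  refine le_iSup₂_of_le _ hball (ENNReal.ofReal_le_ofReal (le_of_eq ?_))
  simp only [Function.comp_apply, smul_eq_mul, abs_mul, abs_inv, abs_of_pos hl₀, abs_of_pos hr]
  field_simp

namespace LocallyLipschitzOnSet

theorem exists_lipschitzOnWith_ball (hv : LocallyLipschitzOnSet v univ) (x : X) (r : ℝ) :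
    ∃ L : ℝ≥0, LipschitzOnWith L v (ball x r) := by
  obtain ⟨L, hL⟩ := hv (closedBall x r) isClosed_closedBall isBounded_closedBall (subset_univ _)
  exact ⟨L, hL.mono ball_subset_closedBall⟩

theorem continuous (hv : LocallyLipschitzOnSet v univ) : Continuous v :=
  LocallyLipschitz.continuous fun x =>
    (hv.exists_lipschitzOnWith_ball x 1).imp fun _ hL => ⟨ball x 1, ball_mem_nhds x one_pos, hL⟩

theorem lipConst_ne_top (hv : LocallyLipschitzOnSet v univ) (x : X) : lipConst v x ≠ ⊤ := by
  obtain ⟨L, hL⟩ := hv.exists_lipschitzOnWith_ball x 1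
  exact ne_top_of_le_ne_top ENNReal.coe_ne_top
    (lipConst_le_of_lipschitzOnWith hL (ball_mem_nhds x one_pos))

theorem integrableOn_ball [MeasurableSpace X] [BorelSpace X] {μ : Measure X}
    (hv : LocallyLipschitzOnSet v univ) {x : X} {r : ℝ} (hμ : μ (ball x r) ≠ ⊤) :
    IntegrableOn v (ball x r) μ := by
  obtain ⟨L, hL⟩ := hv.exists_lipschitzOnWith_ball x r
  obtain ⟨w, hw, hvw⟩ := hL.extend_real
  obtain ⟨M, hM⟩ := (hw.isBounded_image isBounded_ball).exists_norm_le
  exact Measure.integrableOn_of_bounded hμ hv.continuous.measurable.aestronglyMeasurable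
    (ae_restrict_of_forall_mem measurableSet_ball fun y hy => hvw hy ▸ hM _ (mem_image_of_mem w hy))

theorem intervalIntegrable_toReal_lipConst_comp [MeasurableSpace X] [BorelSpace X]
    (hv : LocallyLipschitzOnSet v univ) {γ : ℝ → X} {L : ℝ} (hL : 0 ≤ L)
    (hγ : ContinuousOn γ (Icc 0 L)) :
    IntervalIntegrable (fun t => (lipConst v (γ t)).toReal) volume 0 L := by
  obtain ⟨R, hR⟩ := (isCompact_Icc.image_of_continuousOn hγ).isBounded.subset_ball (γ 0)
  obtain ⟨K, hK⟩ := hv.exists_lipschitzOnWith_ball (γ 0) R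
  rw [intervalIntegrable_iff_integrableOn_Icc_of_le hL]
  refine Integrable.of_bound ((measurable_lipConst hv.continuous).ennreal_toReal.comp_aemeasurable
    (hγ.aemeasurable measurableSet_Icc)).aestronglyMeasurable K ?_
  refine ae_restrict_of_forall_mem measurableSet_Icc fun t ht => ?_
  rw [Real.norm_of_nonneg ENNReal.toReal_nonneg]
  exact ENNReal.toReal_mono ENNReal.coe_ne_top (lipConst_le_of_lipschitzOnWith hK
    (isOpen_ball.mem_nhds (hR (mem_image_of_mem γ ht))))

theorem isUpperGradientOf_lipConst [MeasurableSpace X] [BorelSpace X]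
    (hv : LocallyLipschitzOnSet v univ) :
    IsUpperGradientOf (fun x => (lipConst v x).toReal) v := by
  intro L hL γ hγ
  obtain ⟨R, hR⟩ := (isCompact_Icc.image_of_continuousOn hγ.continuousOn).isBounded.subset_ball
    (γ 0)
  obtain ⟨K, hK⟩ := hv.exists_lipschitzOnWith_ball (γ 0) R
  have hcomp : LipschitzOnWith K (v ∘ γ) (Icc 0 L) := by
    simpa only [mul_one] using hK.comp hγ (mapsTo_iff_image_subset.2 hR)
  have hac : AbsolutelyContinuousOnInterval (v ∘ γ) 0 L :=
    LipschitzOnWith.absolutelyContinuousOnInterval (by rwa [uIcc_of_le hL])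
  have hderiv : ∀ᵐ t ∂volume.restrict (Icc 0 L),
      |deriv (v ∘ γ) t| ≤ (lipConst v (γ t)).toReal := by
    rw [← restrict_Ioo_eq_restrict_Icc]
    filter_upwards [(hcomp.mono Ioo_subset_Icc_self).ae_differentiableWithinAt_real
      measurableSet_Ioo, ae_restrict_mem measurableSet_Ioo] with t hdiff ht
    have hnhds := Ioo_mem_nhds ht.1 ht.2
    exact (ENNReal.ofReal_le_iff_le_toReal (hv.lipConst_ne_top _)).1 (ofReal_abs_deriv_le_lipConst
      (hγ.mono Ioo_subset_Icc_self) hnhds (hdiff.differentiableAt hnhds).hasDerivAt)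
  calc |v (γ 0) - v (γ L)| = |∫ t in (0 : ℝ)..L, deriv (v ∘ γ) t| := by
        rw [hac.integral_deriv_eq_sub, abs_sub_comm, Function.comp_apply, Function.comp_apply]
    _ ≤ ∫ t in (0 : ℝ)..L, |deriv (v ∘ γ) t| := intervalIntegral.abs_integral_le_integral_abs hL
    _ ≤ ∫ t in (0 : ℝ)..L, (lipConst v (γ t)).toReal :=
        intervalIntegral.integral_mono_ae_restrict hL hac.intervalIntegrable_deriv.abs
          (hv.intervalIntegrable_toReal_lipConst_comp hL hγ.continuousOn) hderiv

theorem setLIntegral_lipConst_ne_top [MeasurableSpace X] {μ : Measure X}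
    (hv : LocallyLipschitzOnSet v univ) {x : X} {r : ℝ} (hμ : μ (ball x r) ≠ ⊤) :
    ∫⁻ y in ball x r, lipConst v y ∂μ ≠ ⊤ := by
  obtain ⟨L, hL⟩ := hv.exists_lipschitzOnWith_ball x r
  exact (setLIntegral_lt_top_of_le_nnreal hμ ⟨L, fun y hy =>
    lipConst_le_of_lipschitzOnWith hL (isOpen_ball.mem_nhds hy)⟩).ne

end LocallyLipschitzOnSet

end LipConst

namespace TendstoL1loc

variable {X : Type u} [PseudoMetricSpace X] [MeasurableSpace X] {μ : Measure X} {v : ℕ → X → ℝ}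
  {u : X → ℝ}

theorem integrableOn_ball [BorelSpace X] (hT : TendstoL1loc μ v u univ)
    (hv : ∀ i, LocallyLipschitzOnSet (v i) univ) (hu : AEStronglyMeasurable u μ) {x : X} {r : ℝ}
    (hμ : μ (ball x r) ≠ ⊤) : IntegrableOn u (ball x r) μ := by
  have hlim := hT (closedBall x r) isClosed_closedBall isBounded_closedBall (subset_univ _)
  obtain ⟨i, hi⟩ := (hlim.eventually (gt_mem_nhds ENNReal.zero_lt_top)).exists
  have hdiff : IntegrableOn (v i - u) (ball x r) μ := by
    refine ⟨((hv i).continuous.measurable.aestronglyMeasurable.sub hu).restrict, ?_⟩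
    simp only [HasFiniteIntegral, Real.enorm_eq_ofReal_abs, Pi.sub_apply]
    exact (lintegral_mono_set ball_subset_closedBall).trans_lt hi
  simpa using ((hv i).integrableOn_ball hμ).sub hdiff

theorem meanOsc_ball_le (hT : TendstoL1loc μ v u univ)
    {x : X} {r : ℝ} (hv : ∀ i, IntegrableOn (v i) (ball x r) μ) (hu : IntegrableOn u (ball x r) μ)
    (hμ : μ (ball x r) ≠ ⊤) {c : ℝ≥0∞} (hc : c ≠ ⊤) {a : ℕ → ℝ≥0∞}
    (ha : ∀ i, meanOsc μ (v i) (ball x r) ≤ c * a i) :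
    meanOsc μ u (ball x r) ≤ c * liminf a atTop := by
  set e : ℕ → ℝ≥0∞ := fun i => ∫⁻ y in closedBall x r, ENNReal.ofReal |v i y - u y| ∂μ
  have he : Tendsto e atTop (𝓝 0) :=
    hT (closedBall x r) isClosed_closedBall isBounded_closedBall (subset_univ _)
  have hlim : Tendsto (fun i => meanOsc μ u (ball x r) - 2 * e i) atTop
      (𝓝 (meanOsc μ u (ball x r))) := by
    simpa using ENNReal.Tendsto.sub tendsto_const_nhds
      (ENNReal.Tendsto.const_mul he (.inr ENNReal.ofNat_ne_top)) (.inr (by simp))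
  rw [← hlim.liminf_eq, ← ENNReal.liminf_const_mul_of_ne_top hc]
  refine liminf_le_liminf (.of_forall fun i => tsub_le_iff_right.2 ?_)
  refine (meanOsc_le_add_two_mul hu (hv i) hμ).trans (add_le_add (ha i) ?_)
  simp only [Real.enorm_eq_ofReal_abs]
  gcongr 2 * ?_
  exact lintegral_mono_set ball_subset_closedBall

end TendstoL1loc

section BV

variable {X : Type u} [MetricSpace X] [MeasurableSpace X] {μ : Measure X} {Cd : ℝ≥0} {CP : ℝ}
  {u : X → ℝ}

theorem IsBV.exists_tendstoL1loc (hu : IsBV μ u) :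
    ∃ v : ℕ → X → ℝ, (∀ i, LocallyLipschitzOnSet (v i) univ) ∧ TendstoL1loc μ v u univ ∧
      liminfMeasure (fun i => μ.withDensity (lipConst (v i))) univ ≠ ⊤ := by
  have hvar := hu.2
  simp only [totVarOn, iInf_lt_iff] at hvar
  obtain ⟨v, hv, hT, hV⟩ := hvar
  exact ⟨v, hv, hT, by
    simpa only [liminfMeasure, withDensity_apply _ MeasurableSet.univ] using hV.ne⟩

variable [BorelSpace X]

theorem IsBV.integrableOn_ball (hu : IsBV μ u) (h : IsDoublingWith μ Cd) (x : X) (r : ℝ) :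
    IntegrableOn u (ball x r) μ := by
  have := h.secondCountableTopology
  obtain ⟨v, hv, hT, -⟩ := hu.exists_tendstoL1loc
  exact hT.integrableOn_ball hv hu.1.aestronglyMeasurable (h.measure_ball_lt_top x r).ne

theorem SupportsPoincare.meanOsc_ball_le (hP : SupportsPoincare μ CP) {v : X → ℝ}
    (hv : LocallyLipschitzOnSet v univ) {x : X} {r : ℝ} (hr : 0 < r) (h₀ : μ (ball x r) ≠ 0)
    (hμ : μ (ball x r) ≠ ⊤) :
    meanOsc μ v (ball x r) ≤
      CP.toNNReal * ENNReal.ofReal r * ∫⁻ y in ball x r, lipConst v y ∂μ := by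
  have hmeas := measurable_lipConst hv.continuous
  have hpos : 0 < μ.real (ball x r) := ENNReal.toReal_pos h₀ hμ
  have hmain := hP v hv (fun x => (lipConst v x).toReal) (fun _ => ENNReal.toReal_nonneg)
    hmeas.ennreal_toReal hv.isUpperGradientOf_lipConst x r hr
  set c := ⨍ z in ball x r, v z ∂μ
  have hle : ∫ y in ball x r, |v y - c| ∂μ ≤
      CP * r * ∫ y in ball x r, (lipConst v y).toReal ∂μ := by
    rw [setAverage_eq, setAverage_eq, smul_eq_mul, smul_eq_mul, mul_left_comm] at hmain
    exact le_of_mul_le_mul_left hmain (inv_pos.2 hpos)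
  have hint : IntegrableOn (fun y => v y - c) (ball x r) μ :=
    (hv.integrableOn_ball hμ).sub (integrableOn_const hμ)
  have hlip := hv.setLIntegral_lipConst_ne_top hμ
  calc meanOsc μ v (ball x r) = ENNReal.ofReal (∫ y in ball x r, |v y - c| ∂μ) := by
        exact (ofReal_integral_norm_eq_lintegral_enorm hint).symm
    _ ≤ ENNReal.ofReal (CP * r * ∫ y in ball x r, (lipConst v y).toReal ∂μ) :=
        ENNReal.ofReal_le_ofReal hle
    _ = CP.toNNReal * ENNReal.ofReal r * ∫⁻ y in ball x r, lipConst v y ∂μ := by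
        rw [integral_toReal hmeas.aemeasurable (ae_lt_top hmeas hlip), ENNReal.ofReal_mul'
          ENNReal.toReal_nonneg, ENNReal.ofReal_mul' hr.le, ENNReal.ofReal_toReal hlip,
          ENNReal.ofReal]

theorem IsBV.exists_hasPoincareBound (hu : IsBV μ u) (h : IsDoublingWith μ Cd)
    (hP : SupportsPoincare μ CP) :
    ∃ ν, HasPoincareBound μ ν CP.toNNReal u ∧ liminfMeasure ν univ ≠ ⊤ := by
  obtain ⟨v, hv, hT, hV⟩ := hu.exists_tendstoL1loc
  refine ⟨fun i => μ.withDensity (lipConst (v i)), fun x r hr => ?_, hV⟩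
  have hμ := (h.measure_ball_lt_top x r).ne
  refine hT.meanOsc_ball_le (fun i => (hv i).integrableOn_ball hμ) (hu.integrableOn_ball h x r) hμ
    (by finiteness) fun i => ?_
  rw [withDensity_apply _ measurableSet_ball]
  exact hP.meanOsc_ball_le (hv i) hr (h.measure_ball_pos x hr).ne' hμ

end BV

theorem statement6_general {X : Type u} [MetricSpace X] [MeasurableSpace X] [BorelSpace X]
    {μ : Measure X} {Cd : ℝ≥0} {CP : ℝ} (h : IsDoublingWith μ Cd) (hP : SupportsPoincare μ CP)
    {u : X → ℝ} (hu : IsBV μ u) :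
    ∀ᵐ x ∂μ, ∀ A : Set X, DensityZeroAt μ A x →
      Tendsto
        (fun r : ℝ =>
          (∫⁻ y in A ∩ ball x r, ENNReal.ofReal |u y - u x| ∂μ) /
            (ENNReal.ofReal r * μ (ball x r)))
        (𝓝[>] (0:ℝ)) (𝓝 0) := by
  obtain ⟨ν, hν, hfin⟩ := hu.exists_hasPoincareBound h hP
  simpa only [Real.enorm_eq_ofReal_abs] using
    hν.ae_tendsto_setLIntegral_inter_ball_div h (hu.integrableOn_ball h) hfin

theorem statement6 {X : Type u} [MetricSpace X] [MeasurableSpace X] [BorelSpace X]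
    (μ : Measure X) (Cd : ℝ≥0) (CP : ℝ) (hCd : 1 ≤ Cd) (hCP : 0 < CP)
    (hX : GoodSpace X μ Cd CP)
    (u : X → ℝ) (hu : IsBV μ u) (hrep : PreciseRep μ u) :
    ∀ᵐ x ∂μ, ∀ A : Set X, DensityZeroAt μ A x →
      Tendsto
        (fun r : ℝ =>
          (∫⁻ y in A ∩ ball x r, ENNReal.ofReal |u y - u x| ∂μ) /
            (ENNReal.ofReal r * μ (ball x r)))
        (𝓝[>] (0:ℝ)) (𝓝 0) := by
  exact statement6_general hX.2.2.2.1 hX.2.2.2.2 hu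

end
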